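/- Let H be a complex Hilbert space, let N and Q be bounded linear operators on H with NQ = QN and Q s.o.t.-quasinilpotent, and set T = N + Q. Let R > max(‖T‖, ‖N‖) and let h : ℂ → ℂ be differentiable on a neighborhood of the closed disc of radius R centered at 0. Define h(T) := (2πi)⁻¹ ∮_{|λ|=R} h(λ)(λ·I − T)⁻¹ dλ and h(N) := (2πi)⁻¹ ∮_{|λ|=R} h(λ)(λ·I − N)⁻¹ dλ. Then h(T) and h(N) commute, and h(T) − h(N) is s.o.t.-quasinilpotent. -/

import Mathlib

/-!
If `S` commutes with an s.o.t.-quasinilpotent operator `Q`, then `QS` is again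
s.o.t.-quasinilpotent (`SotQuasinilpotent.mul_of_commute`). Indeed
`((QS)*)ⁿ(QS)ⁿ = (Q*)ⁿ(S*)ⁿSⁿQⁿ ≤ ‖S‖²ⁿ (Q*)ⁿQⁿ`, so the Löwner–Heinz inequality gives
`Aₙ ≤ ‖S‖² Bₙ` for the `n`-th roots `Aₙ` and `Bₙ` of `((QS)*)ⁿ(QS)ⁿ` and `(Q*)ⁿQⁿ`
(`root_mul_le`). As `0 ≤ Aₙ` and `‖Aₙ‖ ≤ ‖QS‖²`, the bound
`‖Aₙξ‖² ≤ ‖Aₙ‖ ⟨Aₙξ, ξ⟩ ≤ ‖QS‖² ‖S‖² ‖Bₙξ‖ ‖ξ‖` forces `Aₙξ → 0`.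

The resolvent identity `(λ - T)⁻¹ - (λ - N)⁻¹ = (λ - T)⁻¹ Q (λ - N)⁻¹` and the commutativity
of `Q` with `N` and `T` give `h(T) - h(N) = QS`, where
`S = (2πi)⁻¹ ∮ h(λ) (λ - T)⁻¹ (λ - N)⁻¹ dλ` commutes with `Q`. Likewise `h(T)` and `h(N)`
commute because all the resolvents involved do (`commute_circleIntegral`).
-/

open scoped NNReal

/-- A bounded operator `Q` on a complex Hilbert space is s.o.t.-quasinilpotent if
`((Q*)ⁿQⁿ)^{1/n} → 0` in the strong operator topology, the `n`-th roots being taken via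
continuous functional calculus. -/
def SotQuasinilpotent {H : Type*} [NormedAddCommGroup H] [InnerProductSpace ℂ H]
    [CompleteSpace H] (Q : H →L[ℂ] H) : Prop :=
  ∀ ξ : H, Filter.Tendsto
    (fun n : ℕ =>
      (CFC.nnrpow ((ContinuousLinearMap.adjoint Q) ^ n * Q ^ n) ((n : ℝ≥0)⁻¹)) ξ)
    Filter.atTop (nhds 0)

section CStar

variable {A : Type*} [CStarAlgebra A] [PartialOrder A] [StarOrderedRing A]

lemma nnrpow_nnreal_smul (s : ℝ≥0) {p : ℝ≥0} (hp : 0 < p) {a : A} (ha : 0 ≤ a) :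
    CFC.nnrpow (s • a) p = (s ^ (p : ℝ)) • CFC.nnrpow a p := by
  have hc : Continuous (fun x : ℝ≥0 => NNReal.nnrpow x p) := NNReal.continuous_nnrpow_const p
  have h0 : NNReal.nnrpow 0 p = 0 := by simp [hp.ne']
  unfold CFC.nnrpow
  rw [← cfcₙ_comp_smul s (fun x : ℝ≥0 => NNReal.nnrpow x p) a hc.continuousOn h0 ha,
    ← cfcₙ_smul (s ^ (p : ℝ)) (fun x : ℝ≥0 => NNReal.nnrpow x p) a hc.continuousOn h0]
  congr 1
  ext x
  simp [NNReal.mul_rpow]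

/-- Since `(qs)ⁿ = sⁿqⁿ`, this is the conjugate by `qⁿ` of `(s*)ⁿsⁿ ≤ ‖s‖²ⁿ`. -/
lemma star_mul_pow_le {q s : A} (hqs : Commute q s) {n : ℕ} (hn : 0 < n) :
    star (q * s) ^ n * (q * s) ^ n ≤ ((‖s‖₊ ^ 2) ^ n) • (star q ^ n * q ^ n) := by
  have e : star (q * s) ^ n * (q * s) ^ n = star (q ^ n) * (star (s ^ n) * s ^ n) * q ^ n := by
    rw [← star_pow, hqs.eq, hqs.symm.mul_pow, star_mul]
    simp only [mul_assoc]
  have hsn : star (s ^ n) * s ^ n ≤ algebraMap ℝ A ((‖s‖ ^ 2) ^ n) := by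
    refine CStarAlgebra.star_mul_le_algebraMap_norm_sq.trans (algebraMap_mono _ ?_)
    rw [pow_right_comm]
    gcongr
    exact norm_pow_le' _ hn
  rw [e]
  refine (star_left_conjugate_le_conjugate hsn _).trans_eq ?_
  rw [Algebra.algebraMap_eq_smul_one, mul_smul_comm, mul_one, smul_mul_assoc, star_pow]
  simp [NNReal.smul_def]

/-- The `n`-th root of `star_mul_pow_le`, by operator monotonicity of `t ↦ t ^ (1 / n)`
(Löwner–Heinz). -/
lemma root_mul_le {q s : A} (hqs : Commute q s) {n : ℕ} (hn : 0 < n) :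
    CFC.nnrpow (star (q * s) ^ n * (q * s) ^ n) ((n : ℝ≥0)⁻¹) ≤
      (‖s‖ ^ 2) • CFC.nnrpow (star q ^ n * q ^ n) ((n : ℝ≥0)⁻¹) := by
  have hp : (0 : ℝ≥0) < (n : ℝ≥0)⁻¹ := by positivity
  have hp1 : ((n : ℝ≥0)⁻¹) ∈ Set.Icc (0 : ℝ≥0) 1 :=
    ⟨hp.le, inv_le_one_of_one_le₀ (by exact_mod_cast hn)⟩
  have hs : ((‖s‖₊ ^ 2) ^ n) ^ (((n : ℝ≥0)⁻¹ : ℝ≥0) : ℝ) = ‖s‖₊ ^ 2 := by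
    push_cast
    exact NNReal.pow_rpow_inv_natCast _ hn.ne'
  have hq : 0 ≤ star q ^ n * q ^ n := by
    rw [← star_pow]; exact star_mul_self_nonneg _
  have := CFC.monotone_nnrpow hp1 (star_mul_pow_le hqs hn)
  simp only [← CFC.nnrpow_eq_pow] at this
  rw [nnrpow_nnreal_smul _ hp hq, hs] at this
  exact this

end CStar

section Roots

variable {H : Type*} [NormedAddCommGroup H] [InnerProductSpace ℂ H] [CompleteSpace H]

/-- Transfers strong convergence to zero from `B` to a smaller positive operator `A`, as long as
`‖A‖` stays bounded. With `D = √A` it follows from `‖Aξ‖² ≤ ‖D‖²‖Dξ‖²` and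
`‖Dξ‖² = ⟨Aξ, ξ⟩ ≤ ⟨Bξ, ξ⟩`. -/
lemma norm_sq_apply_le_of_nonneg_of_le {A B : H →L[ℂ] H} (hA : 0 ≤ A) (hAB : A ≤ B) (ξ : H) :
    ‖A ξ‖ ^ 2 ≤ ‖A‖ * (‖B ξ‖ * ‖ξ‖) := by
  set D := CFC.sqrt A with hD
  have hDD : D * D = A := CFC.sqrt_mul_sqrt_self A hA
  have hDsa : D.adjoint = D := (CFC.sqrt_nonneg A).isSelfAdjoint
  have hDnorm : ‖D‖ ^ 2 = ‖A‖ := by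
    rw [hD, CFC.norm_sqrt A hA, Real.sq_sqrt (norm_nonneg _)]
  have h1 : ‖A ξ‖ ≤ ‖D‖ * ‖D ξ‖ := by
    rw [← hDD]; exact D.le_opNorm _
  have h2 : ‖D ξ‖ ^ 2 ≤ ‖B ξ‖ * ‖ξ‖ := by
    have e : ‖D ξ‖ ^ 2 = RCLike.re (inner ℂ (A ξ) ξ) := by
      rw [← hDD, mul_apply_eq_comp]
      conv_rhs => rw [← hDsa, ContinuousLinearMap.adjoint_inner_left, hDsa]
      rw [inner_self_eq_norm_sq]
    have hle : RCLike.re (inner ℂ (A ξ) ξ) ≤ RCLike.re (inner ℂ (B ξ) ξ) := by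
      have := ((ContinuousLinearMap.le_def A B).1 hAB).re_inner_nonneg_left ξ
      rw [sub_apply, inner_sub_left, map_sub] at this
      linarith
    rw [e]
    exact hle.trans (re_inner_le_norm _ _)
  calc ‖A ξ‖ ^ 2 ≤ (‖D‖ * ‖D ξ‖) ^ 2 := by gcongr
    _ = ‖A‖ * ‖D ξ‖ ^ 2 := by rw [mul_pow, hDnorm]
    _ ≤ _ := by gcongr

/-- The roots in the definition of s.o.t.-quasinilpotence are bounded uniformly in `n`. -/
lemma norm_root_le (P : H →L[ℂ] H) {n : ℕ} (hn : 0 < n) :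
    ‖CFC.nnrpow (P.adjoint ^ n * P ^ n) ((n : ℝ≥0)⁻¹)‖ ≤ ‖P‖ ^ 2 := by
  have hstar : P.adjoint ^ n = star (P ^ n) := by
    rw [star_pow, ContinuousLinearMap.star_eq_adjoint]
  rw [CFC.nnrpow_eq_pow, CFC.norm_nnrpow _ (by positivity)
    (by rw [hstar]; exact star_mul_self_nonneg _), hstar, CStarRing.norm_star_mul_self]
  have h : ‖P ^ n‖ * ‖P ^ n‖ ≤ (‖P‖ ^ 2) ^ n := by
    rw [← sq, pow_right_comm]
    gcongr
    exact norm_pow_le' _ hn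
  calc _ ≤ ((‖P‖ ^ 2) ^ n) ^ (((n : ℝ≥0)⁻¹ : ℝ≥0) : ℝ) := by gcongr
    _ = ‖P‖ ^ 2 := by
      push_cast
      exact Real.pow_rpow_inv_natCast (by positivity) hn.ne'

/-- Multiplying by a commuting operator preserves s.o.t.-quasinilpotence. -/
lemma SotQuasinilpotent.mul_of_commute {Q S : H →L[ℂ] H} (hQ : SotQuasinilpotent Q)
    (hQS : Commute Q S) : SotQuasinilpotent (Q * S) := by
  intro ξ
  have hlim : Filter.Tendsto (fun n : ℕ => ‖Q * S‖ ^ 2 * (‖S‖ ^ 2 *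
      ‖(CFC.nnrpow (Q.adjoint ^ n * Q ^ n) ((n : ℝ≥0)⁻¹)) ξ‖ * ‖ξ‖)) Filter.atTop (nhds 0) := by
    have := (((hQ ξ).norm.const_mul (‖S‖ ^ 2)).mul_const ‖ξ‖).const_mul (‖Q * S‖ ^ 2)
    simpa using this
  rw [tendsto_zero_iff_norm_tendsto_zero]
  have hsq : Filter.Tendsto (fun n : ℕ =>
      ‖(CFC.nnrpow ((Q * S).adjoint ^ n * (Q * S) ^ n) ((n : ℝ≥0)⁻¹)) ξ‖ ^ 2)
      Filter.atTop (nhds 0) := by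
    refine squeeze_zero' (.of_forall fun n => by positivity) ?_ hlim
    filter_upwards [Filter.eventually_gt_atTop 0] with n hn
    have hle := root_mul_le hQS hn
    simp only [ContinuousLinearMap.star_eq_adjoint] at hle
    have h0 : 0 ≤ CFC.nnrpow ((Q * S).adjoint ^ n * (Q * S) ^ n) ((n : ℝ≥0)⁻¹) :=
      CFC.nnrpow_nonneg
    have hb := norm_root_le (Q * S) hn
    refine (norm_sq_apply_le_of_nonneg_of_le h0 hle ξ).trans ?_
    have : ‖((‖S‖ ^ 2) • CFC.nnrpow (Q.adjoint ^ n * Q ^ n) ((n : ℝ≥0)⁻¹)) ξ‖ =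
        ‖S‖ ^ 2 * ‖(CFC.nnrpow (Q.adjoint ^ n * Q ^ n) ((n : ℝ≥0)⁻¹)) ξ‖ := by
      rw [smul_apply, norm_smul]
      simp
    rw [this]
    exact mul_le_mul_of_nonneg_right hb (by positivity)
  simpa using hsq.sqrt

end Roots

section Contour

variable {E F : Type*} [NormedAddCommGroup E] [NormedSpace ℂ E] [CompleteSpace E]
  [NormedAddCommGroup F] [NormedSpace ℂ F] [CompleteSpace F]

lemma map_circleIntegral (L : E →L[ℂ] F) {f : ℂ → E} {c : ℂ} {R : ℝ}
    (hf : CircleIntegrable f c R) :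
    L (∮ z in C(c, R), f z) = ∮ z in C(c, R), L (f z) := by
  simp only [circleIntegral]
  rw [← L.intervalIntegral_comp_comm hf.out]
  simp

/-- An element commuting with the integrand commutes with the integral: left and right
multiplication by `a` are continuous linear maps, so both pass under the integral sign. -/
lemma commute_circleIntegral {A : Type*} [NormedRing A] [NormedAlgebra ℂ A] [CompleteSpace A]
    {a : A} {f : ℂ → A} {c : ℂ} {R : ℝ} (hR : 0 ≤ R) (hf : CircleIntegrable f c R)
    (h : ∀ z ∈ Metric.sphere c R, Commute a (f z)) : Commute a (∮ z in C(c, R), f z) := by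
  have e := map_circleIntegral (ContinuousLinearMap.mul ℂ A a) hf
  have e' := map_circleIntegral ((ContinuousLinearMap.mul ℂ A).flip a) hf
  simp only [ContinuousLinearMap.mul_apply', ContinuousLinearMap.flip_apply] at e e'
  rw [Commute, SemiconjBy, e, e']
  exact circleIntegral.integral_congr hR fun z hz => (h z hz).eq

end Contour

section Resolvent

lemma commute_ringInverse_right {M : Type*} [MonoidWithZero M] {a b : M} (h : Commute a b) :
    Commute a (Ring.inverse b) := by
  by_cases hb : IsUnit b
  · obtain ⟨u, rfl⟩ := hb
    rw [Ring.inverse_unit]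
    exact h.units_inv_right
  · rw [Ring.inverse_non_unit _ hb]
    exact Commute.zero_right a

variable {A : Type*} [NormedRing A] [NormedAlgebra ℂ A] [CompleteSpace A]

lemma isUnit_smul_one_sub [NormOneClass A] {a : A} {z : ℂ} (h : ‖a‖ < ‖z‖) :
    IsUnit (z • (1 : A) - a) := by
  have := spectrum.mem_resolventSet_of_norm_lt h
  rwa [spectrum.mem_resolventSet_iff, Algebra.algebraMap_eq_smul_one] at this

lemma continuousOn_resolvent_sphere {a : A} {R : ℝ}
    (h : ∀ z ∈ Metric.sphere (0 : ℂ) R, IsUnit (z • (1 : A) - a)) :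
    ContinuousOn (fun z : ℂ => Ring.inverse (z • (1 : A) - a)) (Metric.sphere 0 R) := by
  intro z hz
  obtain ⟨u, hu⟩ := h z hz
  have h1 : ContinuousAt Ring.inverse (z • (1 : A) - a) := hu ▸ NormedRing.inverse_continuousAt u
  have h2 : ContinuousAt (fun z : ℂ => z • (1 : A) - a) z := by fun_prop
  exact (ContinuousAt.comp (f := fun z : ℂ => z • (1 : A) - a) h1 h2).continuousWithinAt

end Resolvent

/-- Let `N, Q` be bounded operators on a complex Hilbert space with `NQ = QN`, `Q`
s.o.t.-quasinilpotent, `T = N + Q`, `R > max(‖T‖, ‖N‖)`, and `h` holomorphic on a neighborhood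
of the closed disc of radius `R`. With `h(T)` and `h(N)` defined by the contour integrals of
the resolvents over the circle `|λ| = R`, the operators `h(T)` and `h(N)` commute and
`h(T) - h(N)` is s.o.t.-quasinilpotent. -/
theorem stmt_17 {H : Type*} [NormedAddCommGroup H] [InnerProductSpace ℂ H] [CompleteSpace H]
    (N Q : H →L[ℂ] H) (hNQ : N * Q = Q * N) (hQ : SotQuasinilpotent Q)
    (T : H →L[ℂ] H) (hT : T = N + Q)
    (R : ℝ) (hR : max ‖T‖ ‖N‖ < R) (h : ℂ → ℂ)
    (hh : ∃ s : Set ℂ, IsOpen s ∧ Metric.closedBall (0 : ℂ) R ⊆ s ∧ DifferentiableOn ℂ h s)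
    (hTop hNop : H →L[ℂ] H)
    (hhT : hTop = (2 * (Real.pi : ℂ) * Complex.I)⁻¹ •
      ∮ z in C(0, R), h z • Ring.inverse (z • (1 : H →L[ℂ] H) - T))
    (hhN : hNop = (2 * (Real.pi : ℂ) * Complex.I)⁻¹ •
      ∮ z in C(0, R), h z • Ring.inverse (z • (1 : H →L[ℂ] H) - N)) :
    Commute hTop hNop ∧ SotQuasinilpotent (hTop - hNop) := by
  have hR0 : 0 ≤ R := (norm_nonneg T).trans ((le_max_left _ _).trans hR.le)
  have hcont : ContinuousOn h (Metric.sphere 0 R) := by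
    obtain ⟨s, -, hs, hd⟩ := hh
    exact hd.continuousOn.mono (Metric.sphere_subset_closedBall.trans hs)
  have hunit {a : H →L[ℂ] H} (ha : ‖a‖ < R) :
      ∀ z ∈ Metric.sphere (0 : ℂ) R, IsUnit (z • (1 : H →L[ℂ] H) - a) := by
    intro z hz
    -- The resolvent-set lemma needs `‖1‖ = 1`, which fails when `H` is trivial.
    rcases subsingleton_or_nontrivial H with hH | hH
    · exact isUnit_of_subsingleton _
    · exact isUnit_smul_one_sub (by rwa [mem_sphere_zero_iff_norm.1 hz])
  have uT := hunit ((le_max_left _ _).trans_lt hR)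
  have uN := hunit ((le_max_right _ _).trans_lt hR)
  have cT := continuousOn_resolvent_sphere uT
  have cN := continuousOn_resolvent_sphere uN
  have iT : CircleIntegrable (fun z => h z • Ring.inverse (z • (1 : H →L[ℂ] H) - T)) 0 R :=
    (hcont.smul cT).circleIntegrable hR0
  have iN : CircleIntegrable (fun z => h z • Ring.inverse (z • (1 : H →L[ℂ] H) - N)) 0 R :=
    (hcont.smul cN).circleIntegrable hR0
  have iS : CircleIntegrable (fun z => h z • (Ring.inverse (z • (1 : H →L[ℂ] H) - T) *
      Ring.inverse (z • (1 : H →L[ℂ] H) - N))) 0 R :=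
    (hcont.smul (cT.mul cN)).circleIntegrable hR0
  have cQN : Commute Q N := hNQ.symm
  have cQT : Commute Q T := by rw [hT]; exact cQN.add_right (Commute.refl Q)
  have cTN : Commute T N := by rw [hT]; exact (Commute.refl N).add_left cQN
  have lin {a b : H →L[ℂ] H} (hab : Commute a b) (z : ℂ) :
      Commute a (z • (1 : H →L[ℂ] H) - b) :=
    ((Commute.one_right a).smul_right z).sub_right hab
  have res {a b : H →L[ℂ] H} (hab : Commute a b) (z : ℂ) :
      Commute a (Ring.inverse (z • (1 : H →L[ℂ] H) - b)) :=
    commute_ringInverse_right (lin hab z)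
  constructor
  · rw [hhT, hhN]
    refine .smul_left (.smul_right ?_ _) _
    refine commute_circleIntegral hR0 iN fun w _ => .smul_right ?_ _
    exact res (commute_circleIntegral hR0 iT fun z _ => .smul_right (res cTN.symm z) _).symm w
  · have key : hTop - hNop = Q * ((2 * (Real.pi : ℂ) * Complex.I)⁻¹ •
        ∮ z in C(0, R), h z • (Ring.inverse (z • (1 : H →L[ℂ] H) - T) *
          Ring.inverse (z • (1 : H →L[ℂ] H) - N))) := by
      rw [hhT, hhN, ← smul_sub, ← circleIntegral.integral_sub iT iN, mul_smul_comm]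
      congr 1
      have e := map_circleIntegral (ContinuousLinearMap.mul ℂ (H →L[ℂ] H) Q) iS
      simp only [ContinuousLinearMap.mul_apply'] at e
      rw [e]
      refine circleIntegral.integral_congr hR0 fun z hz => ?_
      have hsub : (z • (1 : H →L[ℂ] H) - N) - (z • (1 : H →L[ℂ] H) - T) = Q := by
        rw [hT]; abel
      rw [← smul_sub, mul_smul_comm,
        Ring.inverse_sub_inverse (iff_of_true (uT z hz) (uN z hz)), hsub, ← mul_assoc,
        (res cQT z).eq]
    rw [key]
    exact hQ.mul_of_commute (.smul_right (commute_circleIntegral hR0 iS fun z _ =>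
      .smul_right ((res cQT z).mul_right (res cQN z)) _) _)
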